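/- Let S be a random walk on ℤ whose step characteristic function φ satisfies (1−φ(θ))/|θ|^α → c₀·e^{±iπγ/2} as θ → ±0 with 1 < α < 2, c₀ > 0, |γ| ≤ 2−α, and which is strongly aperiodic. Then there is a constant C such that for all n ≥ 1 and x ∈ ℤ, p^n(x) ≤ C·n^{−1/α}·min(1, (|x|/n^{1/α})^{−α}). -/

import Mathlib

open Filter Topology

/-- `pn p n x` is the `n`-step transition probability `P[S_n = x]`. -/
noncomputable def pn (p : ℤ → ℝ) : ℕ → ℤ → ℝ
  | 0, x => if x = 0 then 1 else 0
  | n + 1, x => ∑' y : ℤ, pn p n y * p (x - y)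

/-- The characteristic function `φ(θ) = E[e^{iθX}]` of the step distribution. -/
noncomputable def rwChar (p : ℤ → ℝ) (θ : ℝ) : ℂ :=
  ∑' x : ℤ, (p x : ℂ) * Complex.exp (Complex.I * θ * x)

/-!
Split the walk at half time: `p^n(x) = ∑ y, p^m(y) p^k(x - y)` with `m + k = n` and `m ≈ k ≈ n / 2`.
In every term one of the two displacements exceeds `|x| / 3`. The mass of such displacements is
`O(n |x|^{-α})` by the truncation inequality, since `1 - φ(θ) = O(|θ|^α)` gives
`1 - φ(θ)^m = O(m |θ|^α)`. The other factor is `O(n^{-1/α})` by Fourier inversion, because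
`|φ(θ)| ≤ exp(-c |θ|^α)` on `[-π, π]`: near `0` this comes from the lower bound on `Re (1 - φ)`,
away from `0` from aperiodicity and compactness.
-/

open MeasureTheory Asymptotics
open scoped Real

section Asymptotics

lemma isBigO_nhds_of_nhdsNE {X E F : Type*} [TopologicalSpace X] [NormedAddCommGroup E]
    [NormedAddCommGroup F] {f : X → E} {g : X → F} {a : X} (hf : f a = 0)
    (h : f =O[𝓝[≠] a] g) : f =O[𝓝 a] g := by
  rw [← nhdsNE_sup_pure]
  exact h.sup (isBigO_pure.2 fun _ ↦ hf)

lemma isBigO_principal_of_isBigO_nhds {X E F : Type*} [TopologicalSpace X] [NormedAddCommGroup E]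
    [NormedAddCommGroup F] {f : X → E} {g : X → F} {K : Set X} {a : X} (hK : IsCompact K)
    (hf : ContinuousOn f K) (hg : ContinuousOn g K) (hg0 : ∀ x ∈ K, x ≠ a → g x ≠ 0)
    (h : f =O[𝓝 a] g) : f =O[𝓟 K] g := by
  obtain ⟨c, hc⟩ := h.bound
  obtain ⟨U, hUc, hU, haU⟩ := eventually_nhds_iff.1 hc
  have hnear : f =O[𝓟 (K ∩ U)] g :=
    IsBigO.of_bound c (eventually_principal.2 fun x hx ↦ hUc x hx.2)
  have hsub : K \ U ⊆ K := Set.sdiff_subset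
  have hfar : f =O[𝓟 (K \ U)] g := by
    have h1 : f =O[𝓟 (K \ U)] fun _ ↦ (1 : ℝ) :=
      (hf.mono hsub).isBigO_principal (hK.diff hU) (by simp)
    exact h1.trans ((hg.mono hsub).isBigO_rev_principal (hK.diff hU) (fun x hx ↦
      hg0 x hx.1 fun hxa ↦ hx.2 (hxa ▸ haU)) _)
  simpa only [Filter.sup_principal, Set.inter_union_sdiff] using hnear.sup hfar

variable {ι : Type*} {l : Filter ι} {f : ι → ℂ} {g : ι → ℝ} {c : ℂ}

lemma isBigO_of_tendsto_div_ofReal (hg : ∀ᶠ i in l, g i ≠ 0)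
    (h : Tendsto (fun i ↦ f i / (g i : ℂ)) l (𝓝 c)) : f =O[l] g :=
  Complex.isBigO_ofReal_right.1 <| isBigO_of_div_tendsto_nhds
    (hg.mono fun _ hi h0 ↦ absurd (Complex.ofReal_eq_zero.1 h0) hi) c h

lemma isBigO_re_of_tendsto_div_ofReal (hc : c.re ≠ 0)
    (h : Tendsto (fun i ↦ f i / (g i : ℂ)) l (𝓝 c)) : g =O[l] fun i ↦ (f i).re := by
  refine isBigO_of_div_tendsto_nhds_of_ne_zero ?_ hc
  simpa only [Function.comp_def, Complex.div_ofReal_re] using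
    (Complex.continuous_re.tendsto c).comp h

lemma isBigO_nhdsNE_of_tendsto_div_abs_rpow {α : ℝ} {f : ℝ → ℂ} {c c' : ℂ}
    (hneg : Tendsto (fun θ ↦ f θ / ((|θ| ^ α : ℝ) : ℂ)) (𝓝[<] 0) (𝓝 c))
    (hpos : Tendsto (fun θ ↦ f θ / ((|θ| ^ α : ℝ) : ℂ)) (𝓝[>] 0) (𝓝 c')) :
    f =O[𝓝[≠] 0] fun θ ↦ |θ| ^ α := by
  have hne : ∀ᶠ θ in 𝓝[≠] (0 : ℝ), |θ| ^ α ≠ 0 :=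
    eventually_mem_nhdsWithin.mono fun θ hθ ↦ (Real.rpow_pos_of_pos (abs_pos.2 hθ) α).ne'
  rw [← nhdsLT_sup_nhdsGT, eventually_sup] at hne
  rw [← nhdsLT_sup_nhdsGT]
  exact (isBigO_of_tendsto_div_ofReal hne.1 hneg).sup (isBigO_of_tendsto_div_ofReal hne.2 hpos)

lemma isBigO_re_nhdsNE_of_tendsto_div_abs_rpow {α : ℝ} {f : ℝ → ℂ} {c c' : ℂ} (hc : c.re ≠ 0)
    (hc' : c'.re ≠ 0)
    (hneg : Tendsto (fun θ ↦ f θ / ((|θ| ^ α : ℝ) : ℂ)) (𝓝[<] 0) (𝓝 c))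
    (hpos : Tendsto (fun θ ↦ f θ / ((|θ| ^ α : ℝ) : ℂ)) (𝓝[>] 0) (𝓝 c')) :
    (fun θ ↦ |θ| ^ α) =O[𝓝[≠] 0] fun θ ↦ (f θ).re := by
  rw [← nhdsLT_sup_nhdsGT]
  exact (isBigO_re_of_tendsto_div_ofReal hc hneg).sup (isBigO_re_of_tendsto_div_ofReal hc' hpos)

lemma one_sub_re_sub_norm_sq_div_two (z : ℂ) :
    (1 - z).re - ‖1 - z‖ ^ 2 / 2 = (1 - ‖z‖) * ((1 + ‖z‖) / 2) := by
  have hz : ‖1 - z‖ ^ 2 = 1 - 2 * z.re + ‖z‖ ^ 2 := by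
    simp only [Complex.sq_norm, Complex.normSq_apply, Complex.sub_re, Complex.sub_im,
      Complex.one_re, Complex.one_im]
    ring
  rw [hz, Complex.sub_re, Complex.one_re]
  ring

lemma isBigO_one_sub_norm (hg : Tendsto g l (𝓝 0)) (hO : (fun i ↦ 1 - f i) =O[l] g)
    (hΩ : g =O[l] fun i ↦ (1 - f i).re) (hf : ∀ᶠ i in l, ‖f i‖ ≤ 1) :
    g =O[l] fun i ↦ 1 - ‖f i‖ := by
  have hsq : (fun i ↦ ‖1 - f i‖ ^ 2 / 2) =o[l] g := by
    have hpow : (fun i ↦ g i ^ 2) =o[l] g := (isLittleO_pow_id one_lt_two).comp_tendsto hg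
    simpa only [div_eq_inv_mul] using
      ((hO.norm_left.pow 2).trans_isLittleO hpow).const_mul_left (2⁻¹ : ℝ)
  have hfactor : (fun i ↦ (1 - f i).re - ‖1 - f i‖ ^ 2 / 2) =O[l] fun i ↦ 1 - ‖f i‖ := by
    refine IsBigO.of_bound 1 (hf.mono fun i hi ↦ ?_)
    rw [one_sub_re_sub_norm_sq_div_two, norm_mul, mul_comm, Real.norm_of_nonneg (by positivity)]
    gcongr
    linarith
  exact (hΩ.trans (hsq.trans_isBigO hΩ).right_isBigO_sub).trans hfactor

end Asymptotics

section Inequalities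

lemma norm_one_sub_pow_le {A : Type*} [NormedRing A] [NormOneClass A] {z : A} (hz : ‖z‖ ≤ 1)
    (m : ℕ) : ‖1 - z ^ m‖ ≤ m * ‖1 - z‖ := by
  induction m with
  | zero => simp
  | succ m ih =>
    calc ‖1 - z ^ (m + 1)‖ = ‖(1 - z ^ m) + z ^ m * (1 - z)‖ := by
          congr 1; rw [pow_succ]; noncomm_ring
      _ ≤ ‖1 - z ^ m‖ + ‖z ^ m‖ * ‖1 - z‖ := norm_add_le_of_le le_rfl (norm_mul_le _ _)
      _ ≤ m * ‖1 - z‖ + 1 * ‖1 - z‖ := by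
          gcongr
          exact (norm_pow_le z m).trans (pow_le_one₀ (norm_nonneg z) hz)
      _ = (m + 1 : ℕ) * ‖1 - z‖ := by push_cast; ring

variable {α : ℝ}

lemma continuous_abs_rpow (hα : 0 ≤ α) : Continuous fun θ : ℝ ↦ |θ| ^ α :=
  continuous_abs.rpow_const fun _ ↦ .inr hα

lemma integral_exp_neg_mul_abs_rpow {b : ℝ} (hα : 0 < α) (hb : 0 < b) :
    ∫ θ : ℝ, Real.exp (-b * |θ| ^ α) = 2 * (b ^ (-(1 / α)) * Real.Gamma (1 / α + 1)) := by
  rw [integral_comp_abs (f := fun θ ↦ Real.exp (-b * θ ^ α)), integral_exp_neg_mul_rpow hα hb,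
    neg_div]

lemma integrable_exp_neg_mul_abs_rpow {b : ℝ} (hα : 0 < α) (hb : 0 < b) :
    Integrable fun θ : ℝ ↦ Real.exp (-b * |θ| ^ α) := by
  refine Integrable.of_integral_ne_zero ?_
  rw [integral_exp_neg_mul_abs_rpow hα hb]
  positivity

lemma rpow_neg_le_two_rpow_mul_rpow_neg {s t β : ℝ} (hβ : 0 ≤ β) (ht : 0 < t) (h : t ≤ 2 * s) :
    s ^ (-β) ≤ 2 ^ β * t ^ (-β) := by
  calc s ^ (-β) ≤ (t / 2) ^ (-β) :=
        Real.rpow_le_rpow_of_nonpos (by positivity) (by linarith) (neg_nonpos.2 hβ)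
    _ = 2 ^ β * t ^ (-β) := by
        rw [Real.div_rpow ht.le two_pos.le, Real.rpow_neg two_pos.le, div_inv_eq_mul, mul_comm]

lemma le_mul_inv_max_div_rpow {a b t y : ℝ} (hα : α ≠ 0) (ht : 0 < t) (hy : 0 ≤ y) (ha : 0 ≤ a)
    (hab : a ≤ b) (hyb : a * y ^ α ≤ b * t) :
    a ≤ b * (max 1 ((y / t ^ (1 / α)) ^ α))⁻¹ := by
  rw [Real.div_rpow hy (by positivity), ← Real.rpow_mul ht.le, one_div_mul_cancel hα,
    Real.rpow_one, le_mul_inv_iff₀ (by positivity), mul_max_of_nonneg _ _ ha, mul_one,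
    mul_div_assoc']
  exact max_le hab ((div_le_iff₀ ht).2 hyb)

lemma re_ofReal_mul_exp_pos {c : ℝ} (hc : 0 < c) {z : ℂ} (hz : |z.im| < π / 2) :
    0 < ((c : ℂ) * Complex.exp z).re := by
  rw [Complex.re_ofReal_mul, Complex.exp_re]
  have hcos : 0 < Real.cos z.im := Real.cos_pos_of_mem_Ioo (abs_lt.1 hz)
  positivity

lemma abs_im_I_mul_pi_mul_div_two_lt {γ : ℝ} (hγ : |γ| < 1) :
    |(Complex.I * π * γ / 2).im| < π / 2 := by
  have him : (Complex.I * π * γ / 2).im = π / 2 * γ := by simp; ring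
  rw [him, abs_mul, abs_of_pos Real.pi_div_two_pos]
  exact mul_lt_of_lt_one_right Real.pi_div_two_pos hγ

end Inequalities

section Convolution

variable {G R : Type*}

/-- The convolution of two functions on a discrete additive group. The fibre of the addition over
`x` is parametrised by the first summand, as in the recursion defining `pn`. -/
noncomputable def tsumConv [Sub G] [NonUnitalNonAssocSemiring R] [TopologicalSpace R]
    (f g : G → R) (x : G) : R :=
  ∑' y, f y * g (x - y)

lemma hasSum_tsumConv [AddGroup G] [NormedRing R] [CompleteSpace R] {f g : G → R}
    (hf : Summable fun x ↦ ‖f x‖) (hg : Summable fun x ↦ ‖g x‖) :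
    HasSum (tsumConv f g) ((∑' x, f x) * ∑' x, g x) := by
  let e : G × G ≃ G × G :=
    (Equiv.prodComm G G).trans ((Equiv.refl G).prodShear fun y ↦ Equiv.subRight y)
  have hprod : HasSum (fun z : G × G ↦ f z.1 * g z.2) ((∑' x, f x) * ∑' x, g x) :=
    hf.of_norm.hasSum.mul hg.of_norm.hasSum (summable_mul_of_summable_norm hf hg)
  have hshear : HasSum (fun z : G × G ↦ f z.2 * g (z.1 - z.2)) ((∑' x, f x) * ∑' x, g x) :=
    e.hasSum_iff.2 hprod
  exact hshear.prod_fiberwise fun x ↦ (hshear.summable.prod_factor x).hasSum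

/-- The mass that `q` puts outside the closed ball of radius `r` around the origin. -/
noncomputable def tailMass [Norm G] (q : G → ℝ) (r : ℝ) : ℝ :=
  ∑' y, {y | r < ‖y‖}.indicator q y

-- One of the two summands of a point outside the ball of radius `2 * r` has norm larger than `r`.
lemma tsumConv_le_tailMass [SeminormedAddGroup G] {f g : G → ℝ} (hf0 : ∀ y, 0 ≤ f y)
    (hg0 : ∀ y, 0 ≤ g y) (hf : Summable f) (hg : Summable g) {a b : ℝ} (ha : ∀ y, f y ≤ a)
    (hb : ∀ y, g y ≤ b) {x : G} {r : ℝ} (hx : 2 * r < ‖x‖) :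
    tsumConv f g x ≤ b * tailMass f r + a * tailMass g r := by
  have hsum : HasSum (fun y ↦ b * {y | r < ‖y‖}.indicator f y +
      a * {y | r < ‖y‖}.indicator g (x - y)) (b * tailMass f r + a * tailMass g r) :=
    ((hf.indicator _).hasSum.mul_left b).add
      (((Equiv.subLeft x).hasSum_iff.2 (hg.indicator _).hasSum).mul_left a)
  have hterm (y : G) : f y * g (x - y) ≤ b * {y | r < ‖y‖}.indicator f y +
      a * {y | r < ‖y‖}.indicator g (x - y) := by
    have hfa : 0 ≤ a * {y | r < ‖y‖}.indicator g (x - y) :=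
      mul_nonneg ((hf0 0).trans (ha 0)) (Set.indicator_nonneg (fun y _ ↦ hg0 y) _)
    have hgb : 0 ≤ b * {y | r < ‖y‖}.indicator f y :=
      mul_nonneg ((hg0 0).trans (hb 0)) (Set.indicator_nonneg (fun y _ ↦ hf0 y) _)
    rcases lt_or_ge r ‖y‖ with hy | hy
    · rw [Set.indicator_of_mem (s := {y | r < ‖y‖}) hy] at hgb ⊢
      nlinarith [mul_le_mul_of_nonneg_left (hb (x - y)) (hf0 y)]
    · have hxy : r < ‖x - y‖ := by linarith [norm_le_norm_sub_add x y]
      rw [Set.indicator_of_mem (s := {y | r < ‖y‖}) hxy] at hfa ⊢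
      nlinarith [mul_le_mul_of_nonneg_right (ha y) (hg0 (x - y))]
  have hconv : Summable fun y ↦ f y * g (x - y) :=
    hsum.summable.of_nonneg_of_le (fun y ↦ mul_nonneg (hf0 y) (hg0 _)) hterm
  exact hasSum_le hterm hconv.hasSum hsum

end Convolution

section CharacteristicFunction

variable {q : ℤ → ℝ}

lemma norm_exp_I_mul_mul_intCast (θ : ℝ) (x : ℤ) : ‖Complex.exp (Complex.I * θ * x)‖ = 1 := by
  simpa [mul_assoc] using Complex.norm_exp_I_mul_ofReal (θ * x)

lemma summable_norm_mul_exp (hq : Summable q) (θ : ℝ) :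
    Summable fun x : ℤ ↦ ‖(q x : ℂ) * Complex.exp (Complex.I * θ * x)‖ := by
  simpa only [norm_mul, norm_exp_I_mul_mul_intCast, mul_one, Complex.norm_real] using hq.norm

lemma continuous_rwChar (hq : Summable q) : Continuous (rwChar q) :=
  continuous_tsum (fun _ ↦ by fun_prop) hq.norm fun x θ ↦ by
    simp only [norm_mul, norm_exp_I_mul_mul_intCast, mul_one, Complex.norm_real, le_refl]

lemma rwChar_zero {s : ℝ} (hq : HasSum q s) : rwChar q 0 = s := by
  simp [rwChar, ← Complex.ofReal_tsum, hq.tsum_eq]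

lemma norm_rwChar_le_tsum_norm (hq : Summable q) (θ : ℝ) :
    ‖rwChar q θ‖ ≤ ∑' x, ‖q x‖ := by
  simpa only [rwChar, norm_mul, norm_exp_I_mul_mul_intCast, mul_one, Complex.norm_real]
    using norm_tsum_le_tsum_norm (summable_norm_mul_exp hq θ)

lemma norm_rwChar_le_one (hq0 : ∀ x, 0 ≤ q x) (hq1 : HasSum q 1) (θ : ℝ) : ‖rwChar q θ‖ ≤ 1 := by
  simpa only [Real.norm_of_nonneg (hq0 _), hq1.tsum_eq] using
    norm_rwChar_le_tsum_norm hq1.summable θ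

lemma norm_tsum_lt_tsum_norm {ι E : Type*} [NormedAddCommGroup E] [CompleteSpace E] {f : ι → E}
    (hf : Summable fun i ↦ ‖f i‖) {i j : ι} (hij : i ≠ j) (h : ‖f i + f j‖ < ‖f i‖ + ‖f j‖) :
    ‖∑' k, f k‖ < ∑' k, ‖f k‖ := by
  classical
  rw [← hf.of_norm.sum_add_tsum_compl (s := {i, j}), ← hf.sum_add_tsum_compl (s := {i, j}),
    Finset.sum_pair hij, Finset.sum_pair hij]
  exact (norm_add_le _ _).trans_lt
    (add_lt_add_of_lt_of_le h (norm_tsum_le_tsum_norm (hf.subtype _)))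

lemma exp_I_mul_mul_ne_exp_I_mul_mul_add_one {θ : ℝ} (hθ0 : θ ≠ 0) (hθ : θ ∈ Set.Icc (-π) π)
    (x : ℤ) :
    Complex.exp (Complex.I * θ * x) ≠ Complex.exp (Complex.I * θ * (x + 1 : ℤ)) := by
  intro h
  have hexp : Complex.exp (θ * Complex.I) = 1 := by
    refine mul_left_cancel₀ (Complex.exp_ne_zero (Complex.I * θ * x)) ?_
    rw [← Complex.exp_add, mul_one, h]
    congr 1
    push_cast
    ring
  have hcos : Real.cos θ = 1 := by rw [← Complex.exp_ofReal_mul_I_re, hexp, Complex.one_re]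
  exact hθ0 ((Real.cos_eq_one_iff_of_lt_of_lt (by linarith [hθ.1, Real.pi_pos])
    (by linarith [hθ.2, Real.pi_pos])).1 hcos)

lemma norm_rwChar_lt_tsum (hq0 : ∀ x, 0 ≤ q x) (hq : Summable q) {x : ℤ}
    (hx : 0 < q x) (hx' : 0 < q (x + 1)) {θ : ℝ} (hθ0 : θ ≠ 0) (hθ : θ ∈ Set.Icc (-π) π) :
    ‖rwChar q θ‖ < ∑' y, q y := by
  have hray : ¬SameRay ℝ ((q x : ℂ) * Complex.exp (Complex.I * θ * x))
      (q (x + 1) * Complex.exp (Complex.I * θ * (x + 1 : ℤ))) := by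
    rw [sameRay_iff_norm_smul_eq]
    simp only [norm_mul, norm_exp_I_mul_mul_intCast, mul_one, Complex.norm_real,
      Real.norm_of_nonneg (hq0 _), Complex.real_smul]
    rw [mul_left_comm, mul_right_inj' (by exact_mod_cast hx'.ne'),
      mul_right_inj' (by exact_mod_cast hx.ne')]
    exact (exp_I_mul_mul_ne_exp_I_mul_mul_add_one hθ0 hθ x).symm
  have h := norm_tsum_lt_tsum_norm (summable_norm_mul_exp hq θ) (by simp : x ≠ x + 1)
    (norm_add_lt_of_not_sameRay hray)
  simpa only [rwChar, norm_mul, norm_exp_I_mul_mul_intCast, mul_one, Complex.norm_real,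
    Real.norm_of_nonneg (hq0 _)] using h

lemma rwChar_tsumConv {f g : ℤ → ℝ} (hf : Summable f) (hg : Summable g) (θ : ℝ) :
    rwChar (tsumConv f g) θ = rwChar f θ * rwChar g θ := by
  rw [rwChar, rwChar, rwChar,
    ← (hasSum_tsumConv (summable_norm_mul_exp hf θ) (summable_norm_mul_exp hg θ)).tsum_eq]
  refine tsum_congr fun x ↦ ?_
  rw [tsumConv, tsumConv, Complex.ofReal_tsum, ← tsum_mul_right]
  refine tsum_congr fun y ↦ ?_
  have hexp : Complex.exp (Complex.I * θ * x) =
      Complex.exp (Complex.I * θ * y) * Complex.exp (Complex.I * θ * (x - y : ℤ)) := by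
    rw [← Complex.exp_add, ← mul_add, ← Int.cast_add, add_sub_cancel]
  rw [hexp, Complex.ofReal_mul]
  ring

lemma integral_exp_I_mul_mul_intCast (k : ℤ) :
    ∫ θ in -π..π, Complex.exp (Complex.I * θ * k) = if k = 0 then (2 * π : ℂ) else 0 := by
  split_ifs with hk
  · simp [hk, two_mul]
  · have hperiod : Complex.exp (Complex.I * k * π) = Complex.exp (Complex.I * k * (-π : ℝ)) := by
      rw [Complex.exp_eq_exp_iff_exists_int]
      exact ⟨k, by push_cast; ring⟩
    simp_rw [mul_right_comm Complex.I _ (k : ℂ)]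
    rw [integral_exp_mul_complex (mul_ne_zero Complex.I_ne_zero (Int.cast_ne_zero.2 hk)), hperiod,
      sub_self, zero_div]

lemma integral_rwChar_mul_exp (hq : Summable q) (x : ℤ) :
    ∫ θ in -π..π, rwChar q θ * Complex.exp (-(Complex.I * θ * x)) = 2 * π * q x := by
  have hmul (y : ℤ) (θ : ℝ) :
      (q y : ℂ) * Complex.exp (Complex.I * θ * y) * Complex.exp (-(Complex.I * θ * x)) =
        q y * Complex.exp (Complex.I * θ * (y - x : ℤ)) := by
    rw [mul_assoc, ← Complex.exp_add, Int.cast_sub, mul_sub, sub_eq_add_neg]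
  have hterm (y : ℤ) : ∫ θ in -π..π, (q y : ℂ) * Complex.exp (Complex.I * θ * (y - x : ℤ)) =
      if y = x then 2 * π * (q x : ℂ) else 0 := by
    rw [intervalIntegral.integral_const_mul, integral_exp_I_mul_mul_intCast]
    rcases eq_or_ne y x with rfl | hyx
    · simp [mul_comm]
    · simp [sub_eq_zero, hyx]
  have hsum : HasSum
      (fun y : ℤ ↦ ∫ θ in -π..π, (q y : ℂ) * Complex.exp (Complex.I * θ * (y - x : ℤ)))
      (∫ θ in -π..π, rwChar q θ * Complex.exp (-(Complex.I * θ * x))) := by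
    refine intervalIntegral.hasSum_integral_of_dominated_convergence (fun y _ ↦ ‖q y‖)
      (fun y ↦ Continuous.aestronglyMeasurable (by fun_prop)) ?_ (ae_of_all _ fun _ _ ↦ hq.norm)
      intervalIntegrable_const (ae_of_all _ fun θ _ ↦ ?_)
    · refine fun y ↦ ae_of_all _ fun θ _ ↦ ?_
      rw [norm_mul, norm_exp_I_mul_mul_intCast, mul_one, Complex.norm_real]
    · simp only [← hmul]
      exact (summable_norm_mul_exp hq θ).of_norm.hasSum.mul_right _
  simp only [hterm] at hsum
  exact hsum.unique (hasSum_ite_eq x _)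

lemma eq_of_rwChar_eq {f g : ℤ → ℝ} (hf : Summable f) (hg : Summable g)
    (h : rwChar f = rwChar g) : f = g := by
  funext x
  have hx : (2 * π : ℂ) * f x = 2 * π * g x := by
    rw [← integral_rwChar_mul_exp hf, ← integral_rwChar_mul_exp hg, h]
  exact_mod_cast mul_left_cancel₀ (mul_ne_zero two_ne_zero (by simp)) hx

lemma abs_le_integral_norm_rwChar (hq : Summable q) (x : ℤ) :
    |q x| ≤ (2 * π)⁻¹ * ∫ θ in -π..π, ‖rwChar q θ‖ := by
  rw [le_inv_mul_iff₀ Real.two_pi_pos]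
  calc 2 * π * |q x|
      = ‖∫ θ in -π..π, rwChar q θ * Complex.exp (-(Complex.I * θ * x))‖ := by
        rw [integral_rwChar_mul_exp hq]
        simp [abs_of_pos Real.pi_pos]
    _ ≤ ∫ θ in -π..π, ‖rwChar q θ * Complex.exp (-(Complex.I * θ * x))‖ :=
        intervalIntegral.norm_integral_le_integral_norm (by linarith [Real.pi_pos])
    _ = ∫ θ in -π..π, ‖rwChar q θ‖ := by
        simp only [norm_mul, Complex.exp_neg, norm_inv, norm_exp_I_mul_mul_intCast, inv_one,
          mul_one]

end CharacteristicFunction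

section TruncationInequality

variable {q : ℤ → ℝ}

/-- The probability mass function with values `q`, which transfers summable families of real
weights to measures. -/
noncomputable def pmfOfHasSum {ι : Type*} (q : ι → ℝ) (hq0 : ∀ x, 0 ≤ q x) (hq1 : HasSum q 1) :
    PMF ι :=
  ⟨fun x ↦ ENNReal.ofReal (q x), by
    rw [ENNReal.summable.hasSum_iff, ← ENNReal.ofReal_tsum_of_nonneg hq0 hq1.summable, hq1.tsum_eq,
      ENNReal.ofReal_one]⟩

lemma charFun_map_toMeasure_pmfOfHasSum (hq0 : ∀ x, 0 ≤ q x) (hq1 : HasSum q 1) (θ : ℝ) :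
    charFun ((pmfOfHasSum q hq0 hq1).toMeasure.map ((↑) : ℤ → ℝ)) θ = rwChar q θ := by
  have hexp : ∀ x : ℤ, Complex.exp (θ * (x : ℝ) * Complex.I) = Complex.exp (Complex.I * θ * x) :=
    fun x ↦ by congr 1; push_cast; ring
  rw [charFun_apply_real, integral_map (by fun_prop) (by fun_prop)]
  simp_rw [hexp]
  rw [PMF.integral_eq_tsum, rwChar]
  · refine tsum_congr fun x ↦ ?_
    rw [Complex.real_smul]
    congr 2
    exact ENNReal.toReal_ofReal (hq0 x)
  · refine Integrable.of_bound (C := 1) (by fun_prop) (ae_of_all _ fun x ↦ ?_)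
    rw [norm_exp_I_mul_mul_intCast]

lemma measureReal_map_toMeasure_pmfOfHasSum (hq0 : ∀ x, 0 ≤ q x) (hq1 : HasSum q 1) (r : ℝ) :
    ((pmfOfHasSum q hq0 hq1).toMeasure.map ((↑) : ℤ → ℝ)).real {x | r < |x|} = tailMass q r := by
  have hset : MeasurableSet {x : ℝ | r < |x|} := measurableSet_lt measurable_const measurable_norm
  rw [Measure.real, Measure.map_apply (by fun_prop) hset, PMF.toMeasure_apply _ (by measurability),
    ENNReal.tsum_toReal_eq, tailMass]
  · refine tsum_congr fun x ↦ ?_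
    by_cases hx : r < |(x : ℝ)|
    · rw [Set.indicator_of_mem (by exact hx), Set.indicator_of_mem (by exact hx)]
      exact ENNReal.toReal_ofReal (hq0 x)
    · rw [Set.indicator_of_notMem (by exact hx), Set.indicator_of_notMem (by exact hx),
        ENNReal.toReal_zero]
  · intro x
    exact ne_top_of_le_ne_top ENNReal.ofReal_ne_top (Set.indicator_le_self _ _ x)

lemma tailMass_le_norm_integral_one_sub_rwChar (hq0 : ∀ x, 0 ≤ q x) (hq1 : HasSum q 1) {r : ℝ}
    (hr : 0 < r) :
    tailMass q r ≤ 2⁻¹ * r * ‖∫ θ in (-2 * r⁻¹)..(2 * r⁻¹), 1 - rwChar q θ‖ := by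
  have : IsProbabilityMeasure ((pmfOfHasSum q hq0 hq1).toMeasure.map ((↑) : ℤ → ℝ)) :=
    Measure.isProbabilityMeasure_map (by fun_prop)
  simpa only [charFun_map_toMeasure_pmfOfHasSum, measureReal_map_toMeasure_pmfOfHasSum] using
    measureReal_abs_gt_le_integral_charFun
      (μ := (pmfOfHasSum q hq0 hq1).toMeasure.map ((↑) : ℤ → ℝ)) hr

end TruncationInequality

section RandomWalk

variable {p : ℤ → ℝ} {α : ℝ}

lemma pn_succ (p : ℤ → ℝ) (n : ℕ) : pn p (n + 1) = tsumConv (pn p n) p := rfl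

lemma pn_nonneg (hp0 : ∀ x, 0 ≤ p x) (n : ℕ) (x : ℤ) : 0 ≤ pn p n x := by
  induction n generalizing x with
  | zero => rw [pn]; split_ifs <;> norm_num
  | succ n ih => exact tsum_nonneg fun y ↦ mul_nonneg (ih y) (hp0 _)

lemma hasSum_pn {s : ℝ} (hp : HasSum p s) (n : ℕ) : HasSum (pn p n) (s ^ n) := by
  induction n with
  | zero => simpa only [pn, pow_zero] using hasSum_ite_eq (0 : ℤ) (1 : ℝ)
  | succ n ih =>
    rw [pn_succ, pow_succ, ← ih.tsum_eq, ← hp.tsum_eq]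
    exact hasSum_tsumConv ih.summable.norm hp.summable.norm

lemma rwChar_pn (hp : Summable p) (n : ℕ) (θ : ℝ) : rwChar (pn p n) θ = rwChar p θ ^ n := by
  induction n with
  | zero =>
    rw [rwChar, tsum_eq_single 0 fun x hx ↦ by simp [pn, hx]]
    simp [pn]
  | succ n ih => rw [pn_succ, rwChar_tsumConv (hasSum_pn hp.hasSum n).summable hp, ih, pow_succ]

lemma pn_add (hp : Summable p) (m n : ℕ) : pn p (m + n) = tsumConv (pn p m) (pn p n) := by
  have hsum (k : ℕ) : Summable (pn p k) := (hasSum_pn hp.hasSum k).summable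
  refine eq_of_rwChar_eq (hsum _) (hasSum_tsumConv (hsum m).norm (hsum n).norm).summable ?_
  funext θ
  rw [rwChar_tsumConv (hsum m) (hsum n), rwChar_pn hp, rwChar_pn hp, rwChar_pn hp, pow_add]

lemma norm_rwChar_lt_one (hp0 : ∀ x, 0 ≤ p x) (hp1 : HasSum p 1) {n : ℕ} {x : ℤ}
    (hx : 0 < pn p n x) (hx' : 0 < pn p n (x + 1)) {θ : ℝ} (hθ0 : θ ≠ 0)
    (hθ : θ ∈ Set.Icc (-π) π) : ‖rwChar p θ‖ < 1 := by
  have hsum : HasSum (pn p n) 1 := by simpa only [one_pow] using hasSum_pn hp1 n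
  have h : ‖rwChar p θ‖ ^ n < 1 := by
    rw [← norm_pow, ← rwChar_pn hp1.summable, ← hsum.tsum_eq]
    exact norm_rwChar_lt_tsum (pn_nonneg hp0 n) hsum.summable hx hx' hθ0 hθ
  exact lt_of_not_ge fun h1 ↦ (one_le_pow₀ h1).not_gt h

lemma exists_norm_rwChar_le_exp (hα : 0 ≤ α) (hp0 : ∀ x, 0 ≤ p x) (hp1 : HasSum p 1)
    (hap : ∃ n x, 0 < pn p n x ∧ 0 < pn p n (x + 1))
    (hΩ : (fun θ ↦ |θ| ^ α) =O[𝓝 0] fun θ ↦ 1 - ‖rwChar p θ‖) :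
    ∃ c, 0 < c ∧ ∀ θ ∈ Set.Icc (-π) π, ‖rwChar p θ‖ ≤ Real.exp (-c * |θ| ^ α) := by
  obtain ⟨n, x, hx, hx'⟩ := hap
  have hpos (θ : ℝ) (hθ : θ ∈ Set.Icc (-π) π) (hθ0 : θ ≠ 0) : 1 - ‖rwChar p θ‖ ≠ 0 :=
    (sub_pos.2 (norm_rwChar_lt_one hp0 hp1 hx hx' hθ0 hθ)).ne'
  have hcont : Continuous fun θ ↦ 1 - ‖rwChar p θ‖ :=
    continuous_const.sub (continuous_rwChar hp1.summable).norm
  obtain ⟨C, hC0, hC⟩ := (isBigO_principal_of_isBigO_nhds isCompact_Icc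
    (continuous_abs_rpow hα).continuousOn hcont.continuousOn hpos hΩ).exists_pos
  refine ⟨C⁻¹, inv_pos.2 hC0, fun θ hθ ↦ ?_⟩
  have hle : |θ| ^ α ≤ C * (1 - ‖rwChar p θ‖) := by
    have h := isBigOWith_principal.1 hC θ hθ
    rwa [Real.norm_of_nonneg (by positivity),
      Real.norm_of_nonneg (sub_nonneg.2 (norm_rwChar_le_one hp0 hp1 θ))] at h
  have hinv : C⁻¹ * |θ| ^ α ≤ 1 - ‖rwChar p θ‖ := (inv_mul_le_iff₀ hC0).2 hle
  linarith [Real.add_one_le_exp (-C⁻¹ * |θ| ^ α)]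

lemma exists_norm_one_sub_rwChar_le (hα : 0 ≤ α) (hp0 : ∀ x, 0 ≤ p x) (hp1 : HasSum p 1)
    (hO : (fun θ ↦ 1 - rwChar p θ) =O[𝓝 0] fun θ ↦ |θ| ^ α) :
    ∃ K, ∀ θ, ‖1 - rwChar p θ‖ ≤ K * |θ| ^ α := by
  obtain ⟨K, hK⟩ := hO.bound
  obtain ⟨δ, hδ, hball⟩ := Metric.eventually_nhds_iff.1 hK
  refine ⟨max K (2 / δ ^ α), fun θ ↦ ?_⟩
  rcases lt_or_ge |θ| δ with hθ | hθ
  · calc ‖1 - rwChar p θ‖ ≤ K * ‖|θ| ^ α‖ := hball (by simpa only [Real.dist_0_eq_abs] using hθ)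
      _ = K * |θ| ^ α := by rw [Real.norm_of_nonneg (by positivity)]
      _ ≤ max K (2 / δ ^ α) * |θ| ^ α := by gcongr; exact le_max_left _ _
  · calc ‖1 - rwChar p θ‖ ≤ 1 + 1 :=
          norm_sub_le_of_le norm_one.le (norm_rwChar_le_one hp0 hp1 θ)
      _ = 2 / δ ^ α * δ ^ α := by field
      _ ≤ max K (2 / δ ^ α) * |θ| ^ α := by gcongr; exact le_max_right _ _

-- The additional factor `exp (-c * |θ| ^ α)`, bounded below on `[-π, π]`, covers the case `n = 0`.
lemma exists_pn_le_mul_rpow {c : ℝ} (hα : 0 < α) (hc : 0 < c) (hp : Summable p)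
    (hφ : ∀ θ ∈ Set.Icc (-π) π, ‖rwChar p θ‖ ≤ Real.exp (-c * |θ| ^ α)) :
    ∃ A, 0 ≤ A ∧ ∀ n x, pn p n x ≤ A * ((n : ℝ) + 1) ^ (-(1 / α)) := by
  have hbound (n : ℕ) (θ : ℝ) (hθ : θ ∈ Set.Icc (-π) π) :
      ‖rwChar (pn p n) θ‖ ≤ Real.exp (c * π ^ α) * Real.exp (-(c * (n + 1)) * |θ| ^ α) := by
    calc ‖rwChar (pn p n) θ‖ ≤ Real.exp (-c * |θ| ^ α) ^ n := by
          rw [rwChar_pn hp, norm_pow]; gcongr; exact hφ θ hθ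
      _ = Real.exp (c * |θ| ^ α) * Real.exp (-(c * (n + 1)) * |θ| ^ α) := by
          rw [← Real.exp_nat_mul, ← Real.exp_add]; ring_nf
      _ ≤ _ := by gcongr; exact abs_le.2 hθ
  refine ⟨(2 * π)⁻¹ * (Real.exp (c * π ^ α) * (2 * (c ^ (-(1 / α)) * Real.Gamma (1 / α + 1)))),
    by positivity, fun n x ↦ ?_⟩
  have hint := (integrable_exp_neg_mul_abs_rpow hα (b := c * (n + 1))
    (by positivity)).const_mul (Real.exp (c * π ^ α))
  have hpi : -π ≤ π := by linarith [Real.pi_pos]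
  calc pn p n x ≤ (2 * π)⁻¹ * ∫ θ in -π..π, ‖rwChar (pn p n) θ‖ :=
        (le_abs_self _).trans (abs_le_integral_norm_rwChar (hasSum_pn hp.hasSum n).summable x)
    _ ≤ (2 * π)⁻¹ * ∫ θ in -π..π,
          Real.exp (c * π ^ α) * Real.exp (-(c * (n + 1)) * |θ| ^ α) := by
        gcongr
        refine intervalIntegral.integral_mono_on hpi ?_ hint.intervalIntegrable (hbound n)
        exact (continuous_rwChar (hasSum_pn hp.hasSum n).summable).norm.intervalIntegrable _ _
    _ ≤ (2 * π)⁻¹ * ∫ θ, Real.exp (c * π ^ α) * Real.exp (-(c * (n + 1)) * |θ| ^ α) := by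
        gcongr
        rw [intervalIntegral.integral_of_le hpi]
        exact setIntegral_le_integral hint (ae_of_all _ fun θ ↦ by positivity)
    _ = _ := by
        rw [integral_const_mul, integral_exp_neg_mul_abs_rpow hα (by positivity),
          Real.mul_rpow hc.le (by positivity)]
        ring

lemma tailMass_pn_le {K : ℝ} (hα : 0 ≤ α) (hp0 : ∀ x, 0 ≤ p x) (hp1 : HasSum p 1)
    (hK : ∀ θ, ‖1 - rwChar p θ‖ ≤ K * |θ| ^ α) (n : ℕ) {r : ℝ} (hr : 0 < r) :
    tailMass (pn p n) r ≤ 2 * n * K * (2 / r) ^ α := by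
  have hnorm (θ : ℝ) (hθ : θ ∈ Set.uIoc (-2 * r⁻¹) (2 * r⁻¹)) :
      ‖1 - rwChar (pn p n) θ‖ ≤ n * (K * (2 / r) ^ α) := by
    have hθr : |θ| ≤ 2 / r := by
      rw [Set.uIoc_of_le (by nlinarith [inv_pos.2 hr])] at hθ
      exact abs_le.2 ⟨by simpa [div_eq_mul_inv] using hθ.1.le, hθ.2⟩
    have hK0 : 0 ≤ K := by simpa using (norm_nonneg _).trans (hK 1)
    calc ‖1 - rwChar (pn p n) θ‖ ≤ n * ‖1 - rwChar p θ‖ := by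
          rw [rwChar_pn hp1.summable]
          exact norm_one_sub_pow_le (norm_rwChar_le_one hp0 hp1 θ) n
      _ ≤ n * (K * |θ| ^ α) := by gcongr; exact hK θ
      _ ≤ n * (K * (2 / r) ^ α) := by gcongr
  calc tailMass (pn p n) r
      ≤ 2⁻¹ * r * ‖∫ θ in (-2 * r⁻¹)..(2 * r⁻¹), 1 - rwChar (pn p n) θ‖ :=
        tailMass_le_norm_integral_one_sub_rwChar (pn_nonneg hp0 n)
          (by simpa only [one_pow] using hasSum_pn hp1 n) hr
    _ ≤ 2⁻¹ * r * (n * (K * (2 / r) ^ α) * |2 * r⁻¹ - -2 * r⁻¹|) := by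
        gcongr; exact intervalIntegral.norm_integral_le_of_norm_le_const hnorm
    _ = 2 * n * K * (2 / r) ^ α := by
        rw [abs_of_pos (by nlinarith [inv_pos.2 hr])]; field

lemma pn_add_mul_rpow_le {a K : ℝ} (hα : 0 < α) (hp0 : ∀ x, 0 ≤ p x) (hp1 : HasSum p 1)
    (hK : ∀ θ, ‖1 - rwChar p θ‖ ≤ K * |θ| ^ α) {m k : ℕ} (hm : ∀ y, pn p m y ≤ a)
    (hk : ∀ y, pn p k y ≤ a) (x : ℤ) :
    pn p (m + k) x * |(x : ℝ)| ^ α ≤ a * (2 * (m + k) * K * 6 ^ α) := by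
  have hK0 : 0 ≤ K := by simpa using (norm_nonneg _).trans (hK 1)
  have ha : 0 ≤ a := (pn_nonneg hp0 m 0).trans (hm 0)
  rcases eq_or_ne x 0 with rfl | hx
  · rw [Int.cast_zero, abs_zero, Real.zero_rpow hα.ne', mul_zero]
    positivity
  have hx0 : 0 < |(x : ℝ)| := abs_pos.2 (Int.cast_ne_zero.2 hx)
  have hsum (j : ℕ) : Summable (pn p j) := (hasSum_pn hp1 j).summable
  have hr : 2 * (|(x : ℝ)| / 3) < ‖x‖ := by rw [Int.norm_eq_abs]; linarith
  have htail (j : ℕ) := tailMass_pn_le hα.le hp0 hp1 hK j (div_pos hx0 three_pos)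
  calc pn p (m + k) x * |(x : ℝ)| ^ α
      ≤ (a * tailMass (pn p m) (|(x : ℝ)| / 3) + a * tailMass (pn p k) (|(x : ℝ)| / 3)) *
          |(x : ℝ)| ^ α := by
        rw [pn_add hp1.summable]
        gcongr
        exact tsumConv_le_tailMass (pn_nonneg hp0 m) (pn_nonneg hp0 k) (hsum m) (hsum k) hm hk hr
    _ ≤ (a * (2 * m * K * (2 / (|(x : ℝ)| / 3)) ^ α) +
          a * (2 * k * K * (2 / (|(x : ℝ)| / 3)) ^ α)) * |(x : ℝ)| ^ α := by
        gcongr <;> exact htail _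
    _ = a * (2 * (m + k) * K * 6 ^ α) := by
        have hsix : 2 / (|(x : ℝ)| / 3) = 6 / |(x : ℝ)| := by field
        rw [hsix, Real.div_rpow (by norm_num) hx0.le]
        field

lemma exists_pn_mul_rpow_le {A K : ℝ} (hα : 0 < α) (hp0 : ∀ x, 0 ≤ p x) (hp1 : HasSum p 1)
    (hA : 0 ≤ A) (hloc : ∀ n x, pn p n x ≤ A * ((n : ℝ) + 1) ^ (-(1 / α)))
    (hK : ∀ θ, ‖1 - rwChar p θ‖ ≤ K * |θ| ^ α) :
    ∃ D, ∀ n : ℕ, 1 ≤ n → ∀ x, pn p n x * |(x : ℝ)| ^ α ≤ D * n ^ (-(1 / α)) * n := by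
  refine ⟨A * 2 ^ (1 / α) * (2 * K * 6 ^ α), fun n hn x ↦ ?_⟩
  have hhalf (m : ℕ) (hm : n ≤ 2 * (m + 1)) (y : ℤ) :
      pn p m y ≤ A * (2 ^ (1 / α) * n ^ (-(1 / α))) := by
    refine (hloc m y).trans ?_
    gcongr
    exact rpow_neg_le_two_rpow_mul_rpow_neg (by positivity) (by exact_mod_cast hn)
      (by exact_mod_cast hm)
  have hsplit := pn_add_mul_rpow_le hα hp0 hp1 hK (hhalf (n / 2) (by omega))
    (hhalf (n - n / 2) (by omega)) x
  rw [← Nat.cast_add, Nat.add_sub_of_le (Nat.div_le_self n 2)] at hsplit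
  exact hsplit.trans_eq (by ring)

end RandomWalk

theorem stmt10_general {p : ℤ → ℝ} {α : ℝ} (hα : 0 < α) (hp0 : ∀ x, 0 ≤ p x) (hp1 : HasSum p 1)
    (hap : ∃ n x, 0 < pn p n x ∧ 0 < pn p n (x + 1))
    (hO : (fun θ ↦ 1 - rwChar p θ) =O[𝓝[≠] 0] fun θ ↦ |θ| ^ α)
    (hΩ : (fun θ ↦ |θ| ^ α) =O[𝓝[≠] 0] fun θ ↦ (1 - rwChar p θ).re) :
    ∃ C : ℝ, ∀ n : ℕ, 1 ≤ n → ∀ x : ℤ,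
      pn p n x ≤ C * (n : ℝ) ^ (-(1 / α)) *
        (max 1 ((|(x : ℝ)| / (n : ℝ) ^ (1 / α)) ^ α))⁻¹ := by
  have hφ0 : 1 - rwChar p 0 = 0 := by rw [rwChar_zero hp1, Complex.ofReal_one, sub_self]
  have hlim : Tendsto (fun θ : ℝ ↦ |θ| ^ α) (𝓝 0) (𝓝 0) :=
    (continuous_abs_rpow hα.le).tendsto' 0 0 (by simp [hα.ne'])
  have hO' := isBigO_nhds_of_nhdsNE (f := fun θ ↦ 1 - rwChar p θ) hφ0 hO
  have hΩ' := isBigO_nhds_of_nhdsNE (f := fun θ : ℝ ↦ |θ| ^ α) (by simp [hα.ne']) hΩ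
  obtain ⟨K, hK⟩ := exists_norm_one_sub_rwChar_le hα.le hp0 hp1 hO'
  obtain ⟨c, hc, hdecay⟩ := exists_norm_rwChar_le_exp hα.le hp0 hp1 hap
    (isBigO_one_sub_norm hlim hO' hΩ' (.of_forall (norm_rwChar_le_one hp0 hp1)))
  obtain ⟨A, hA, hlocal⟩ := exists_pn_le_mul_rpow hα hc hp1.summable hdecay
  obtain ⟨D, hfar⟩ := exists_pn_mul_rpow_le hα hp0 hp1 hA hlocal hK
  refine ⟨max A D, fun n hn x ↦ ?_⟩
  have hn0 : (0 : ℝ) < n := by exact_mod_cast hn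
  refine le_mul_inv_max_div_rpow hα.ne' hn0 (abs_nonneg _) (pn_nonneg hp0 n x) ?_ ?_
  · calc pn p n x ≤ A * ((n : ℝ) + 1) ^ (-(1 / α)) := hlocal n x
      _ ≤ max A D * n ^ (-(1 / α)) := by
          gcongr ?_ * ?_
          · exact le_max_left A D
          · exact Real.rpow_le_rpow_of_nonpos hn0 (by linarith) (by simp [hα.le])
  · exact (hfar n hn x).trans (by gcongr; exact le_max_right A D)

/-- Lemma 7.6: for a strongly aperiodic walk in the normal domain of attraction
of a stable law of index `α ∈ (1,2)` (i.e. `(1−φ(θ))/|θ|^α → c₀ e^{±iπγ/2}` as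
`θ → ±0`), there is `C` with `p^n(x) ≤ C n^{−1/α} min(1, (|x|/n^{1/α})^{−α})`,
the min written as `(max(1, (|x|/n^{1/α})^α))⁻¹`. -/
theorem stmt10 (p : ℤ → ℝ) (α γ c₀ : ℝ)
    (hα : 1 < α) (hα2 : α < 2) (hγ : |γ| ≤ 2 - α) (hc₀ : 0 < c₀)
    (hp0 : ∀ x, 0 ≤ p x) (hp1 : HasSum p 1)
    (hap : ∀ x : ℤ, ∀ᶠ n in atTop, 0 < pn p n x)
    (hpos : Tendsto (fun θ : ℝ => (1 - rwChar p θ) / ((|θ| ^ α : ℝ) : ℂ)) (𝓝[>] 0)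
      (𝓝 ((c₀ : ℂ) * Complex.exp (Complex.I * Real.pi * γ / 2))))
    (hneg : Tendsto (fun θ : ℝ => (1 - rwChar p θ) / ((|θ| ^ α : ℝ) : ℂ)) (𝓝[<] 0)
      (𝓝 ((c₀ : ℂ) * Complex.exp (-(Complex.I * Real.pi * γ / 2))))) :
    ∃ C : ℝ, ∀ n : ℕ, 1 ≤ n → ∀ x : ℤ,
      pn p n x ≤ C * (n : ℝ) ^ (-(1 / α)) *
        (max 1 ((|(x : ℝ)| / (n : ℝ) ^ (1 / α)) ^ α))⁻¹ := by
  have hangle : |(Complex.I * π * γ / 2).im| < π / 2 :=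
    abs_im_I_mul_pi_mul_div_two_lt (by linarith)
  have hre_pos := re_ofReal_mul_exp_pos hc₀ hangle
  have hre_neg := re_ofReal_mul_exp_pos hc₀ (z := -(Complex.I * π * γ / 2)) (by
    rwa [Complex.neg_im, abs_neg])
  obtain ⟨n, hn⟩ := ((hap 0).and (hap 1)).exists
  exact stmt10_general (one_pos.trans hα) hp0 hp1 ⟨n, 0, hn⟩
    (isBigO_nhdsNE_of_tendsto_div_abs_rpow hneg hpos)
    (isBigO_re_nhdsNE_of_tendsto_div_abs_rpow hre_neg.ne' hre_pos.ne' hneg hpos)
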